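/- For any completely regular Hausdorff (Tychonoff) topological space X, the following are equivalent: (i) Player II has a winning Markov strategy in the ω-Menger game G_fin(Ω_X, Ω_X); (ii) for every f ∈ C_p(X), Player II has a winning Markov strategy in the countable fan tightness game G_fin(ℬ_{C_p(X),f}, ℬ_{C_p(X),f}); (iii) for every f ∈ C_p(X), Player II has a winning Markov strategy in the countable dense fan tightness game G_fin(𝒟_{C_p(X)}, ℬ_{C_p(X),f}). -/

import Mathlib

open TopologicalSpace Cardinal

/-- Player II has a winning (perfect-information) strategy in the selection game
`G_fin(𝒜, ℬ)`: during round `n`, Player I plays `A n ∈ 𝒜` and II responds with a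
finite subset of `A n` depending on `⟨A 0, …, A n⟩`; II wins iff the union of
its selections lies in `ℬ`. -/
def WinStratFin {X : Type*} (𝒜 ℬ : Set (Set X)) : Prop :=
  ∃ σ : (n : ℕ) → (Fin (n + 1) → Set X) → Set X,
    (∀ (n : ℕ) (s : Fin (n + 1) → Set X), (∀ i, s i ∈ 𝒜) →
      (σ n s).Finite ∧ σ n s ⊆ s (Fin.last n)) ∧
    ∀ A : ℕ → Set X, (∀ n, A n ∈ 𝒜) →
      (⋃ n : ℕ, σ n (fun i => A i)) ∈ ℬ

/-- Player II has a winning Markov strategy in `G_fin(𝒜, ℬ)`: its finite selection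
from `A n` depends only on `A n` and the round number `n`. -/
def WinMarkovFin {X : Type*} (𝒜 ℬ : Set (Set X)) : Prop :=
  ∃ σ : Set X → ℕ → Set X,
    (∀ A ∈ 𝒜, ∀ n : ℕ, (σ A n).Finite ∧ σ A n ⊆ A) ∧
    ∀ A : ℕ → Set X, (∀ n, A n ∈ 𝒜) → (⋃ n : ℕ, σ (A n) n) ∈ ℬ

/-- Player II has a winning (perfect-information) strategy in the strong selection
game `G_1(𝒜, ℬ)`: during round `n`, Player I plays `A n ∈ 𝒜` and II responds with a
single element of `A n` depending on `⟨A 0, …, A n⟩`; II wins iff the set of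
its selections lies in `ℬ`. -/
def WinStratOne {X : Type*} (𝒜 ℬ : Set (Set X)) : Prop :=
  ∃ σ : (n : ℕ) → (Fin (n + 1) → Set X) → X,
    (∀ (n : ℕ) (s : Fin (n + 1) → Set X), (∀ i, s i ∈ 𝒜) →
      σ n s ∈ s (Fin.last n)) ∧
    ∀ A : ℕ → Set X, (∀ n, A n ∈ 𝒜) →
      {x | ∃ n : ℕ, x = σ n (fun i => A i)} ∈ ℬ

/-- Player II has a winning Markov strategy in `G_1(𝒜, ℬ)`. -/
def WinMarkovOne {X : Type*} (𝒜 ℬ : Set (Set X)) : Prop :=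
  ∃ σ : Set X → ℕ → X,
    (∀ A ∈ 𝒜, ∀ n : ℕ, σ A n ∈ A) ∧
    ∀ A : ℕ → Set X, (∀ n, A n ∈ 𝒜) → {x | ∃ n : ℕ, x = σ (A n) n} ∈ ℬ

/-- `𝒟_X`: the collection of dense subsets of `X`. -/
def denseFamily (X : Type*) [TopologicalSpace X] : Set (Set X) := {D | Dense D}

/-- `ℬ_{X,x}`: the collection of subsets of `X` having `x` in their closure. -/
def blades (X : Type*) [TopologicalSpace X] (x : X) : Set (Set X) :=
  {A | x ∈ closure A}

/-- An ω-cover of `X`: an open cover such that every finite subset of `X` is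
contained in some member. -/
def IsOmegaCover {X : Type*} [TopologicalSpace X] (𝒰 : Set (Set X)) : Prop :=
  (∀ U ∈ 𝒰, IsOpen U) ∧ (⋃₀ 𝒰 = Set.univ) ∧
    ∀ F : Set X, F.Finite → ∃ U ∈ 𝒰, F ⊆ U

/-- `Ω_X`: the collection of ω-covers of `X`. -/
def omegaCovers (X : Type*) [TopologicalSpace X] : Set (Set (Set X)) :=
  {𝒰 | IsOmegaCover 𝒰}

/-- `𝒪_X`: the collection of open covers of `X`. -/
def openCovers (X : Type*) [TopologicalSpace X] : Set (Set (Set X)) :=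
  {𝒰 | (∀ U ∈ 𝒰, IsOpen U) ∧ ⋃₀ 𝒰 = Set.univ}

/-- `C_p(X)`: continuous real-valued functions on `X` with the topology of
pointwise convergence (subspace of the product `ℝ^X`). -/
abbrev Cp (X : Type*) [TopologicalSpace X] : Type _ := {f : X → ℝ // Continuous f}

/-- Countable fan tightness of `Y` at `y`. -/
def CFTat (Y : Type*) [TopologicalSpace Y] (y : Y) : Prop :=
  ∀ A : ℕ → Set Y, (∀ n, y ∈ closure (A n)) →
    ∃ B : ℕ → Set Y, (∀ n, (B n).Finite ∧ B n ⊆ A n) ∧ y ∈ closure (⋃ n, B n)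

/-- Countable dense fan tightness of `Y` at `y`. -/
def CDFTat (Y : Type*) [TopologicalSpace Y] (y : Y) : Prop :=
  ∀ A : ℕ → Set Y, (∀ n, Dense (A n)) →
    ∃ B : ℕ → Set Y, (∀ n, (B n).Finite ∧ B n ⊆ A n) ∧ y ∈ closure (⋃ n, B n)

/-- Selective separability of `X`. -/
def SelSep (X : Type*) [TopologicalSpace X] : Prop :=
  ∀ D : ℕ → Set X, (∀ n, Dense (D n)) →
    ∃ E : ℕ → Set X, (∀ n, (E n).Finite ∧ E n ⊆ D n) ∧ Dense (⋃ n, E n)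

/-- The Ω-Menger selection principle `S_fin(Ω_X, Ω_X)`. -/
def OmegaMenger (X : Type*) [TopologicalSpace X] : Prop :=
  ∀ 𝒰 : ℕ → Set (Set X), (∀ n, 𝒰 n ∈ omegaCovers X) →
    ∃ ℱ : ℕ → Set (Set X), (∀ n, (ℱ n).Finite ∧ ℱ n ⊆ 𝒰 n) ∧
      (⋃ n, ℱ n) ∈ omegaCovers X

/-- The one-point Lindelöfication topology on `Option α`: sets not containing
`none` (the point `∞`) are open, and a set containing `∞` is open iff its
complement is countable. -/
def lindTop (α : Type*) : TopologicalSpace (Option α) where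
  IsOpen S := none ∈ S → Sᶜ.Countable
  isOpen_univ := by simp
  isOpen_inter := by
    intro s t hs ht hmem
    rw [Set.compl_inter]
    exact (hs hmem.1).union (ht hmem.2)
  isOpen_sUnion := by
    intro S hS hmem
    obtain ⟨s, hsS, hns⟩ := hmem
    exact ((hS s hsS hns).mono
      (Set.compl_subset_compl.mpr (Set.subset_sUnion_of_mem hsS)))

theorem mem_closure_Cp {X : Type*} [TopologicalSpace X] (A : Set (Cp X)) (f : Cp X) :
    f ∈ closure A ↔ ∀ F : Set X, F.Finite → ∀ ε : ℝ, 0 < ε →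
      ∃ g ∈ A, ∀ x ∈ F, |g.1 x - f.1 x| < ε := by
  constructor
  · intro h F hF ε hε
    rw [mem_closure_iff] at h
    have ho : IsOpen {g : Cp X | ∀ x ∈ F, |g.1 x - f.1 x| < ε} := by
      have : {g : Cp X | ∀ x ∈ F, |g.1 x - f.1 x| < ε} =
          ⋂ x ∈ F, {g : Cp X | |g.1 x - f.1 x| < ε} := by
        ext g; simp
      rw [this]
      refine hF.isOpen_biInter fun x _ => ?_
      refine isOpen_lt ?_ continuous_const
      exact (((continuous_apply x).comp continuous_subtype_val).sub continuous_const).abs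
    obtain ⟨g, hg, hgA⟩ := h _ ho (by intro x _; simpa using hε)
    exact ⟨g, hgA, hg⟩
  · intro h
    rw [mem_closure_iff_nhds]
    intro t ht
    replace ht := (mem_nhds_subtype _ f t).1 ht
    obtain ⟨u, hu, hut⟩ := ht
    rw [nhds_pi, Filter.mem_pi] at hu
    obtain ⟨I, hI, s, hs, hIs⟩ := hu
    have h1 : ∀ x, ∃ ε > 0, Metric.ball (f.1 x) ε ⊆ s x := fun x => Metric.mem_nhds_iff.1 (hs x)
    choose e he hes using h1
    have h2 : ∃ ε : ℝ, 0 < ε ∧ ∀ x ∈ I, ε ≤ e x := by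
      rcases I.eq_empty_or_nonempty with rfl | hne
      · exact ⟨1, one_pos, by simp⟩
      · obtain ⟨a, _, ha⟩ := Set.exists_min_image I e hI hne
        exact ⟨e a, he a, ha⟩
    obtain ⟨ε, h0, hε⟩ := h2
    obtain ⟨g, hgA, hg⟩ := h I hI ε h0
    refine ⟨g, hut (hIs fun x hx => hes x ?_), hgA⟩
    rw [Metric.mem_ball, Real.dist_eq]
    exact (hg x hx).trans_le (hε x hx)

theorem omega_of_finite {X : Type*} [TopologicalSpace X] {𝒰 : Set (Set X)}
    (ho : ∀ U ∈ 𝒰, IsOpen U) (h : ∀ F : Set X, F.Finite → ∃ U ∈ 𝒰, F ⊆ U) :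
    𝒰 ∈ omegaCovers X := by
  refine ⟨ho, ?_, h⟩
  refine Set.eq_univ_of_forall fun x => ?_
  obtain ⟨U, hU, hx⟩ := h {x} (Set.finite_singleton x)
  exact ⟨U, hU, hx rfl⟩

theorem aux12 {X : Type*} [TopologicalSpace X]
    (h : WinMarkovFin (omegaCovers X) (omegaCovers X)) (f : Cp X) :
    WinMarkovFin (blades (Cp X) f) (blades (Cp X) f) := by
  classical
  obtain ⟨τ, hτ, hw⟩ := h
  let V : ℕ → Cp X → Set X := fun n g => {x | |g.1 x - f.1 x| < 1 / ((n : ℝ) + 1)}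
  have hcov : ∀ n, ∀ A ∈ blades (Cp X) f, V n '' A ∈ omegaCovers X := by
    intro n A hA
    refine omega_of_finite ?_ ?_
    · rintro _ ⟨g, _, rfl⟩
      exact isOpen_lt (g.2.sub f.2).abs continuous_const
    · intro F hF
      obtain ⟨g, hg, hgF⟩ := (mem_closure_Cp A f).1 hA F hF _ (Nat.one_div_pos_of_nat (n := n))
      exact ⟨_, ⟨g, hg, rfl⟩, hgF⟩
  have hc : ∀ (n : ℕ) (A : Set (Cp X)) (U : Set X), ∃ g : Cp X, U ∈ V n '' A → g ∈ A ∧ V n g = U := by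
    intro n A U
    by_cases hU : U ∈ V n '' A
    · obtain ⟨g, hg⟩ := hU
      exact ⟨g, fun _ => hg⟩
    · exact ⟨f, fun h => absurd h hU⟩
  choose c hc using hc
  refine ⟨fun A n => c n A '' ⋃ k ∈ Set.Iic n, τ (V n '' A) k, ?_, ?_⟩
  · intro A hA n
    refine ⟨((Set.finite_Iic n).biUnion fun k _ => (hτ _ (hcov n A hA) k).1).image _, ?_⟩
    rintro _ ⟨U, hU, rfl⟩
    simp only [Set.mem_iUnion] at hU
    obtain ⟨k, _, hU⟩ := hU
    exact (hc n A U ((hτ _ (hcov n A hA) k).2 hU)).1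
  · intro A hA
    refine (mem_closure_Cp _ f).2 fun F hF ε hε => ?_
    obtain ⟨N, hN⟩ := exists_nat_one_div_lt hε
    obtain ⟨U, hU, hFU⟩ := (hw (fun k => V (k + N) '' A (k + N))
      (fun k => hcov _ _ (hA _))).2.2 F hF
    obtain ⟨k, hU⟩ := Set.mem_iUnion.1 hU
    have hcU := hc (k + N) (A (k + N)) U ((hτ _ (hcov _ _ (hA _)) k).2 hU)
    refine ⟨c (k + N) (A (k + N)) U, Set.mem_iUnion.2 ⟨k + N, U, ?_, rfl⟩, ?_⟩
    · simp only [Set.mem_iUnion]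
      exact ⟨k, Nat.le_add_right _ _, hU⟩
    · intro x hx
      have := hFU hx
      rw [← hcU.2] at this
      refine (lt_trans (lt_of_lt_of_le this ?_) hN)
      exact Nat.one_div_le_one_div (Nat.le_add_left _ _)

theorem aux31 {X : Type*} [TopologicalSpace X] [CompletelyRegularSpace X]
    (h : ∀ f : Cp X, WinMarkovFin (denseFamily (Cp X)) (blades (Cp X) f)) :
    WinMarkovFin (omegaCovers X) (omegaCovers X) := by
  classical
  obtain ⟨σ, hσ, hw⟩ := h ⟨fun _ => 0, continuous_const⟩
  let D : Set (Set X) → Set (Cp X) := fun 𝒰 => {g | ∃ U ∈ 𝒰, ∀ x, x ∉ U → g.1 x = 1}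
  have hD : ∀ 𝒰 ∈ omegaCovers X, D 𝒰 ∈ denseFamily (Cp X) := by
    intro 𝒰 h𝒰 f
    refine (mem_closure_Cp _ f).2 fun F hF ε hε => ?_
    obtain ⟨U, hU, hFU⟩ := h𝒰.2.2 F hF
    have h1 : ∀ x : X, ∃ φ : X → ℝ, Continuous φ ∧ (x ∈ F → φ x = 0 ∧ ∀ y, y ∉ U → φ y = 1) := by
      intro x
      by_cases hx : x ∈ F
      · obtain ⟨φ, hφ, h0, h1⟩ := CompletelyRegularSpace.completely_regular x Uᶜ
          (h𝒰.1 U hU).isClosed_compl (fun h => h (hFU hx))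
        refine ⟨fun y => φ y, by fun_prop, fun _ => ⟨by simp [h0], fun y hy => ?_⟩⟩
        have := h1 hy
        simp [this]
      · exact ⟨fun _ => 0, continuous_const, fun h => absurd h hx⟩
    choose φ hφ hφ' using h1
    let P : X → ℝ := fun y => ∏ x ∈ hF.toFinset, φ x y
    have hP : Continuous P := continuous_finsetProd _ fun x _ => hφ x
    refine ⟨⟨fun y => P y + (1 - P y) * f.1 y, ?_⟩, ⟨U, hU, fun y hy => ?_⟩, fun x hx => ?_⟩
    · have := f.2
      fun_prop
    · have : P y = 1 := Finset.prod_eq_one fun x hx => (hφ' x (by simpa using hx)).2 y hy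
      simp [this]
    · have : P x = 0 := Finset.prod_eq_zero (i := x) (by simpa using hx) (hφ' x hx).1
      simpa [this] using hε
  have hc : ∀ (𝒰 : Set (Set X)) (g : Cp X), ∃ U, g ∈ D 𝒰 → U ∈ 𝒰 ∧ ∀ x, x ∉ U → g.1 x = 1 := by
    intro 𝒰 g
    by_cases hg : g ∈ D 𝒰
    · obtain ⟨U, hU⟩ := hg
      exact ⟨U, fun _ => hU⟩
    · exact ⟨∅, fun h => absurd h hg⟩
  choose c hc using hc
  have hs : ∀ 𝒰 ∈ omegaCovers X, ∀ n, c 𝒰 '' σ (D 𝒰) n ⊆ 𝒰 := by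
    rintro 𝒰 h𝒰 n _ ⟨g, hg, rfl⟩
    exact (hc 𝒰 g ((hσ _ (hD 𝒰 h𝒰) n).2 hg)).1
  refine ⟨fun 𝒰 n => c 𝒰 '' σ (D 𝒰) n, fun 𝒰 h𝒰 n =>
    ⟨(hσ _ (hD 𝒰 h𝒰) n).1.image _, hs 𝒰 h𝒰 n⟩, ?_⟩
  intro 𝒰 h𝒰
  refine omega_of_finite ?_ ?_
  · intro U hU
    obtain ⟨n, hU⟩ := Set.mem_iUnion.1 hU
    exact (h𝒰 n).1 U (hs _ (h𝒰 n) n hU)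
  · intro F hF
    obtain ⟨g, hg, hgF⟩ := (mem_closure_Cp _ _).1
      (hw (fun n => D (𝒰 n)) fun n => hD _ (h𝒰 n)) F hF 1 one_pos
    obtain ⟨n, hg⟩ := Set.mem_iUnion.1 hg
    refine ⟨c (𝒰 n) g, Set.mem_iUnion.2 ⟨n, g, hg, rfl⟩, fun x hx => ?_⟩
    by_contra hxU
    have h1 := (hc (𝒰 n) g ((hσ _ (hD _ (h𝒰 n)) n).2 hg)).2 x hxU
    have h2 := hgF x hx
    simp [h1] at h2

/-- the Markov-strategy analogue of Statement 4. -/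
theorem statement5 (X : Type*) [TopologicalSpace X] [T35Space X] :
    List.TFAE [WinMarkovFin (omegaCovers X) (omegaCovers X),
      ∀ f : Cp X, WinMarkovFin (blades (Cp X) f) (blades (Cp X) f),
      ∀ f : Cp X, WinMarkovFin (denseFamily (Cp X)) (blades (Cp X) f)] := by
  tfae_have 1 → 2 := fun h f => aux12 h f
  tfae_have 2 → 3 := by
    intro h f
    obtain ⟨σ, h1, h2⟩ := h f
    exact ⟨σ, fun A hA => h1 A (hA f), fun A hA => h2 A fun n => hA n f⟩
  tfae_have 3 → 1 := aux31
  tfae_finish
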